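/- arXiv:1907.05725 — 3 statements merged into one kernel-verified Lean document; each statement's English description precedes it below -/
import Mathlib

section
/- For all integers k ≥ 1 and c ≥ 2k, there exist finite simple graphs G and H on the same number of vertices and a bijection Φ from V(G) to V(H) such that d_k^G(v) = d_k^H(Φ(v)) for every vertex v of G, G contains a matching of size at least (c+1)·c^k / 2, and H has a vertex cover of size at most 2k·c^k. -/
open SimpleGraph

/-- A set of edges of `G` forming a matching: pairwise vertex-disjoint edges of `G`. -/
def IsMatchingSet {V : Type*} (G : SimpleGraph V) (M : Set (Sym2 V)) : Prop :=
  M ⊆ G.edgeSet ∧ ∀ e ∈ M, ∀ f ∈ M, e ≠ f → ∀ v : V, ¬(v ∈ e ∧ v ∈ f)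

/-- The matching number `ν(G)`: the maximum size of a matching in `G`. -/
noncomputable def matchingNumber {V : Type*} (G : SimpleGraph V) : ℕ :=
  sSup {n | ∃ M : Set (Sym2 V), IsMatchingSet G M ∧ M.ncard = n}
/-- The type of `k`-level degrees: `LD 0 = ℕ` records a plain degree (a `1`-level degree),
and a `(k+2)`-level degree is a multiset of `(k+1)`-level degrees. -/
def LD : ℕ → Type
  | 0 => ℕ
  | (k+1) => Multiset (LD k)

/-- `kdeg G k v` is the `(k+1)`-level degree `d_{k+1}^G(v)`: `kdeg G 0 v = deg_G v`, and
`kdeg G (k+1) v` is the multiset of the values `kdeg G k w` over the neighbors `w` of `v`.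
Thus for `k ≥ 1` the quantity `d_k^G(v)` of the paper is `kdeg G (k-1) v`. -/
noncomputable def kdeg {V : Type*} [Fintype V] (G : SimpleGraph V) : (k : ℕ) → V → LD k
  | 0, v => (G.neighborSet v).ncard
  | (k+1), v => ((G.neighborSet v).toFinite.toFinset.val).map (kdeg G k)

/-! Generic part: level degrees computed from a quotient (block) matrix. -/

/-- Level degrees of blocks computed from the block degree matrix `D`. -/
def ldq {B : Type} [Fintype B] (D : B → B → ℕ) : (k : ℕ) → B → LD k
  | 0, p => (∑ q, D p q • (1 : ℕ) : ℕ)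
  | (k+1), p => (∑ q, D p q • ({ldq D k q} : Multiset (LD k)) : Multiset (LD k))

theorem kdeg_comap {V W : Type} [Fintype V] [Fintype W] (e : V ≃ W) (G : SimpleGraph W) (r : ℕ) :
    ∀ v, kdeg (G.comap e) r v = kdeg G r (e v) := by
  induction r with
  | zero =>
    intro v
    change ((G.comap e).neighborSet v).ncard = (G.neighborSet (e v)).ncard
    rw [← Set.ncard_image_of_injective _ e.injective]
    congr 1
    ext w
    simp only [Set.mem_image, SimpleGraph.mem_neighborSet, SimpleGraph.comap_adj]
    constructor
    · rintro ⟨a, ha, rfl⟩; exact ha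
    · intro h; exact ⟨e.symm w, by simpa using h, by simp⟩
  | succ r ih =>
    intro v
    change ((((G.comap e).neighborSet v).toFinite.toFinset.val).map (kdeg (G.comap e) r) : Multiset (LD r))
      = (((G.neighborSet (e v)).toFinite.toFinset.val).map (kdeg G r))
    have h1 : (G.neighborSet (e v)).toFinite.toFinset
        = (((G.comap e).neighborSet v).toFinite.toFinset).map e.toEmbedding := by
      ext w
      simp only [Set.Finite.mem_toFinset, Finset.mem_map, SimpleGraph.mem_neighborSet, SimpleGraph.comap_adj]
      constructor
      · intro h; exact ⟨e.symm w, by simpa using h, by simp⟩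
      · rintro ⟨a, ha, rfl⟩; exact ha
    rw [h1, Finset.map_val, Multiset.map_map]
    exact Multiset.map_congr rfl (fun x _ => ih x)

theorem kdeg_eq_ldq {V B : Type} [Fintype V] [Fintype B] [DecidableEq B] (G : SimpleGraph V) (π : V → B)
    (D : B → B → ℕ)
    (h : ∀ v q, (((G.neighborSet v).toFinite.toFinset).filter (fun w => π w = q)).card = D (π v) q)
    (r : ℕ) : ∀ v, kdeg G r v = ldq D r (π v) := by
  induction r with
  | zero =>
    intro v
    change (G.neighborSet v).ncard = ∑ q, D (π v) q • (1 : ℕ)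
    rw [Set.ncard_eq_toFinset_card _ (Set.toFinite _)]
    rw [Finset.card_eq_sum_card_fiberwise (f := π) (t := Finset.univ) (by intro x _; simp)]
    simp [h]
  | succ r ih =>
    intro v
    change (((G.neighborSet v).toFinite.toFinset.val).map (kdeg G r) : Multiset (LD r))
      = ∑ q, D (π v) q • ({ldq D r q} : Multiset (LD r))
    rw [Multiset.map_congr rfl (fun x _ => ih x)]
    have h2 : ∀ s : Finset V, (s.val.map (fun x => ldq D r (π x)) : Multiset (LD r))
        = ∑ x ∈ s, ({ldq D r (π x)} : Multiset (LD r)) := by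
      intro s
      induction s using Finset.cons_induction with
      | empty => simp
      | cons a s ha ih' => rw [Finset.sum_cons, ← ih', Finset.cons_val, Multiset.map_cons, Multiset.singleton_add]
    rw [h2, ← Finset.sum_fiberwise (g := π)]
    refine Finset.sum_congr rfl (fun q _ => ?_)
    rw [← h v q, ← Finset.sum_const]
    refine Finset.sum_congr rfl (fun x hx => ?_)
    rw [(Finset.mem_filter.1 hx).2]

theorem zmod_count (M : ℕ) [NeZero M] (x : ZMod M) (d : ℕ) (hd : d ≤ M) :
    (Finset.univ.filter (fun y : ZMod M => (x + y).val < d)).card = d := by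
  conv_rhs => rw [← Finset.card_range d]
  refine Finset.card_bij (fun y _ => (x + y).val) ?_ ?_ ?_
  · intro a ha; simpa using ha
  · intro a _ b _ hab
    exact add_left_cancel (ZMod.val_injective M hab)
  · intro b hb
    have hb' : b < d := by simpa using hb
    refine ⟨(b : ZMod M) - x, ?_, ?_⟩
    · simp [ZMod.val_cast_of_lt (lt_of_lt_of_le hb' hd), hb']
    · simp [ZMod.val_cast_of_lt (lt_of_lt_of_le hb' hd)]

/-- The blow-up graph of a symmetric block matrix. -/
def blow {B : Type} (M : ℕ) (D : B → B → ℕ) (hs : ∀ p q, D p q = D q p) (h0 : ∀ p, D p p = 0) :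
    SimpleGraph (B × ZMod M) where
  Adj v w := (v.2 + w.2).val < D v.1 w.1
  symm := ⟨fun v w h => by rw [add_comm, hs]; exact h⟩
  loopless := ⟨fun v h => by rw [h0] at h; omega⟩

theorem kdeg_blow {B : Type} [Fintype B] [DecidableEq B] (M : ℕ) [NeZero M] (D : B → B → ℕ)
    (hs : ∀ p q, D p q = D q p) (h0 : ∀ p, D p p = 0) (hM : ∀ p q, D p q ≤ M) (r : ℕ) (v) :
    kdeg (blow M D hs h0) r v = ldq D r v.1 := by
  refine kdeg_eq_ldq _ Prod.fst D ?_ r v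
  rintro ⟨p, x⟩ q
  rw [← zmod_count M x (D p q) (hM p q)]
  refine Finset.card_bij (fun w _ => w.2) ?_ ?_ ?_
  · rintro ⟨a, y⟩ h
    simp only [Finset.mem_filter, Set.Finite.mem_toFinset, SimpleGraph.mem_neighborSet] at h
    obtain ⟨h, rfl⟩ := h
    have h' : (x + y).val < D p a := h
    simpa using h'
  · rintro ⟨a, y⟩ h ⟨a', y'⟩ h' hh
    simp only [Finset.mem_filter] at h h'
    ext
    · simp [h.2, h'.2]
    · exact hh
  · intro y hy
    refine ⟨(q, y), ?_, rfl⟩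
    simp only [Finset.mem_filter, Set.Finite.mem_toFinset, SimpleGraph.mem_neighborSet]
    have hy' : (x + y).val < D p q := by simpa using hy
    exact ⟨hy', trivial⟩

/-! The numbers. -/

/-- Partial sums of the label degrees. -/
def BB (t : ℕ) : ℕ → ℕ
  | 0 => 0
  | 1 => 1
  | (j+2) => (BB t (j+1) - BB t j) * (t + (j - 1))

/-- Label degrees. -/
def bb (t j : ℕ) : ℕ := BB t j - BB t (j - 1)

theorem BB_mono3 (t : ℕ) (ht : 3 ≤ t) (j : ℕ) : BB t j ≤ BB t (j+1) ∧ BB t (j+1) ≤ BB t (j+2) ∧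
    BB t (j+1) - BB t j ≤ BB t (j+2) - BB t (j+1) := by
  induction j with
  | zero => simp [BB]; omega
  | succ j ih =>
    obtain ⟨h1, h2, h3⟩ := ih
    refine ⟨h2, ?_⟩
    rcases j with _ | j
    · simp [BB]
      obtain ⟨s, rfl⟩ := Nat.exists_eq_add_of_le ht
      have e : 3 + s - 1 = s + 2 := by omega
      rw [e]
      constructor
      · nlinarith
      · have : (3 + s) + (3 + s) ≤ (s + 2) * (3 + s) + 1 := by nlinarith
        have : (3 + s) ≤ (s + 2) * (3 + s) := by nlinarith
        omega
    · obtain ⟨y, hy⟩ := Nat.exists_eq_add_of_le h1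
      obtain ⟨x, hx⟩ := Nat.exists_eq_add_of_le h2
      have hb2 : BB t (j+1+2) = (BB t (j+1+1) - BB t (j+1)) * (t + (j+1 - 1)) := rfl
      have hb3 : BB t (j+1+1+2) = (BB t (j+1+1+1) - BB t (j+1+1)) * (t + (j+1+1 - 1)) := rfl
      have e2 : BB t (j+1+1) - BB t (j+1) = y := by omega
      have e3 : BB t (j+1+2) - BB t (j+1+1) = x := by omega
      have e3' : BB t (j+1+1+1) - BB t (j+1+1) = x := e3
      rw [e2] at hb2 h3
      rw [e3] at h3
      rw [e3'] at hb3
      simp only [Nat.add_sub_cancel] at hb2 hb3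
      have key : BB t (j+1+2) + x ≤ BB t (j+1+1+2) := by
        rw [hb2, hb3]; nlinarith
      have key' : BB t (j+1+1+1) + x ≤ BB t (j+1+1+2) := key
      omega

theorem BB_mono (t k : ℕ) (ht : k ≤ t) (j : ℕ) (hj : j + 1 ≤ k) : BB t j ≤ BB t (j+1) := by
  by_cases h3 : 3 ≤ t
  · exact (BB_mono3 t h3 j).1
  · have : j = 0 ∨ j = 1 := by omega
    rcases this with rfl | rfl
    · simp [BB]
    · simp [BB]; omega

theorem sum_bb (t k : ℕ) (ht : k ≤ t) (j : ℕ) (hj : j ≤ k) :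
    ∑ i ∈ Finset.range j, bb t (i+1) = BB t j := by
  induction j with
  | zero => simp [BB]
  | succ j ih =>
    rw [Finset.sum_range_succ, ih (by omega)]
    have := BB_mono t k ht j hj
    simp only [bb, Nat.add_sub_cancel]
    omega

theorem bb_le (t k c : ℕ) (hc : t + k ≤ c) (hk : 1 ≤ k) (j : ℕ) (hj : j ≤ k) : bb t j ≤ c ^ k := by
  have key : ∀ j, j ≤ k → BB t j ≤ c ^ j := by
    intro j
    induction j using Nat.strong_induction_on with
    | _ j ih =>
      intro hj
      match j with
      | 0 => simp [BB]
      | 1 => simp [BB]; omega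
      | j+2 =>
        have := ih (j+1) (by omega) (by omega)
        rw [BB, pow_succ]
        apply Nat.mul_le_mul <;> omega
  calc bb t j ≤ BB t j := Nat.sub_le _ _
    _ ≤ c ^ j := key j hj
    _ ≤ c ^ k := Nat.pow_le_pow_right (by omega) hj

/-- Cluster degree matrix. -/
def ww (t i j : ℕ) : ℕ := if min i j = 0 ∨ min i j + 2 ≤ max i j then bb t (max i j) else 0

theorem ww_symm (t i j : ℕ) : ww t i j = ww t j i := by
  simp only [ww, min_comm, max_comm]

theorem ww_row (t k : ℕ) (ht : k ≤ t) (j : ℕ) (hj : j + 1 ≤ k) :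
    t * ww t j 0 + ∑ i ∈ Finset.range (j+1), ww t j (i+1) =
      ∑ i ∈ Finset.range (j+1), bb t (i+1) := by
  rcases j with _ | j
  · simp [ww, bb, BB]
  · rw [sum_bb t k ht _ hj]
    have h1 : ∀ i ∈ Finset.range (j+1+1), ww t (j+1) (i+1) = if i ∈ Finset.range (j-1) then bb t (j+1) else 0 := by
      intro i hi
      simp only [Finset.mem_range] at hi ⊢
      unfold ww
      by_cases h : i < j - 1
      · rw [if_pos h, if_pos (by omega), max_eq_left (by omega)]
      · rw [if_neg h, if_neg (by omega)]
    rw [Finset.sum_congr rfl h1, Finset.sum_ite_mem,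
      Finset.inter_eq_right.2 (by intro x; simp; omega)]
    simp [ww, BB, bb]
    ring

theorem row_eq {A : Type} [AddCommMonoid A] (t k : ℕ) (ht : k ≤ t) (j : ℕ) (hj : j + 1 ≤ k)
    (f : ℕ → A) (hf : ∀ i, i ≤ j + 1 → f i = f 0) :
    (t * ww t j 0) • f 0 + ∑ i ∈ Finset.range k, ww t j (i+1) • f (i+1) =
    (t * ww t 0 0) • f 0 + ∑ i ∈ Finset.range k, ww t 0 (i+1) • f (i+1) := by
  have hw : ∀ i, ww t 0 i = bb t i := by intro i; simp [ww]
  have main : ∀ g : ℕ → ℕ, ∑ i ∈ Finset.range k, g i • f (i+1) =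
      (∑ i ∈ Finset.range (j+1), g i) • f 0 + ∑ i ∈ Finset.Ico (j+1) k, g i • f (i+1) := by
    intro g
    rw [← Finset.sum_range_add_sum_Ico _ hj, Finset.sum_smul]
    congr 1
    refine Finset.sum_congr rfl (fun i hi => ?_)
    rw [hf (i+1) (by simp at hi; omega)]
  rw [main, main, ← add_assoc, ← add_assoc, ← add_smul, ← add_smul, ww_row t k ht j hj]
  congr 1
  · simp [hw]; simp [bb]
  · refine Finset.sum_congr rfl (fun i hi => ?_)
    congr 1
    simp at hi
    rw [hw]
    unfold ww
    rw [if_pos (by omega), max_eq_right (by omega)]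

/-! The two block matrices. -/

/-- Cluster of a block. -/
def clu {t k : ℕ} : Fin t ⊕ Fin k → ℕ
  | Sum.inl _ => 0
  | Sum.inr j => j + 1

/-- Block matrix of `H`. -/
def DH (t k : ℕ) (p q : Bool × (Fin t ⊕ Fin k)) : ℕ :=
  if p.1 = q.1 then ww t (clu p.2) (clu q.2) else 0

/-- Block matrix of `G`. -/
def DG (t k : ℕ) (p q : Bool × (Fin t ⊕ Fin k)) : ℕ :=
  if p.1 = q.1 then
    (if clu p.2 + clu q.2 = 1 then 0 else ww t (clu p.2) (clu q.2))
  else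
    (if clu p.2 = 0 ∧ p.2 = q.2 then 1 else if clu p.2 = 1 ∧ clu q.2 = 1 then t else 0)

theorem sumH {A : Type} [AddCommMonoid A] (t k : ℕ) (p : Bool × (Fin t ⊕ Fin k)) (f : ℕ → A) :
    ∑ q, DH t k p q • f (clu q.2) = (t * ww t (clu p.2) 0) • f 0 +
      ∑ i ∈ Finset.range k, ww t (clu p.2) (i+1) • f (i+1) := by
  obtain ⟨β, u⟩ := p
  rw [Fintype.sum_prod_type, Finset.sum_range]
  cases β <;> simp [DH, clu, mul_smul]

theorem sumG {A : Type} [AddCommMonoid A] (t k : ℕ) (hk : 1 ≤ k) (p : Bool × (Fin t ⊕ Fin k)) (f : ℕ → A)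
    (hf : f 1 = f 0) :
    ∑ q, DG t k p q • f (clu q.2) = ∑ q, DH t k p q • f (clu q.2) := by
  obtain ⟨β, u⟩ := p
  have hw0 : ww t 0 0 = 0 := by simp [ww, bb]
  have hw1 : ww t 0 1 = 1 := by simp [ww, bb, BB]
  have hw2 : ww t 1 0 = 1 := by simp [ww, bb, BB]
  have hw3 : ww t 1 1 = 0 := by simp [ww]
  rw [Fintype.sum_prod_type, Fintype.sum_prod_type]
  rcases k with _ | k
  · omega
  rcases u with u | u
  · cases β <;> simp [DH, DG, clu, Fin.sum_univ_succ, hw0, hw1, hf, ite_smul, add_comm]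
  · induction u using Fin.cases with
    | zero => cases β <;> simp [DH, DG, clu, Fin.sum_univ_succ, hw2, hw3, hf, add_comm]
    | succ u =>
      have hne : ∀ a b : ℕ, ¬ (a + 1 + 1 + (b + 1 + 1) = 1) := by omega
      cases β <;> simp [DH, DG, clu, Fin.sum_univ_succ, hne]

theorem ldH_eq (t k : ℕ) (ht : k ≤ t) (r : ℕ) : ∃ L : ℕ → LD r, (∀ p, ldq (DH t k) r p = L (clu p.2)) ∧
    ∀ j, r + 1 + j ≤ k → L j = L 0 := by
  induction r with
  | zero =>
    refine ⟨fun j => ((t * ww t j 0) • 1 + ∑ i ∈ Finset.range k, ww t j (i+1) • 1 : ℕ), ?_, ?_⟩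
    · intro p
      exact sumH t k p (fun _ => (1:ℕ))
    · intro j hj
      exact row_eq t k ht j (by omega) (fun _ => (1:ℕ)) (fun _ _ => rfl)
  | succ r ih =>
    obtain ⟨L, h1, h2⟩ := ih
    refine ⟨fun j => ((t * ww t j 0) • {L 0} + ∑ i ∈ Finset.range k, ww t j (i+1) • {L (i+1)} :
      Multiset (LD r)), ?_, ?_⟩
    · intro p
      refine Eq.trans ?_ (sumH t k p (fun i => ({L i} : Multiset (LD r))))
      change (∑ q, DH t k p q • ({ldq (DH t k) r q} : Multiset (LD r))) = _
      simp only [h1]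
    · intro j hj
      refine row_eq t k ht j (by omega) (fun i => ({L i} : Multiset (LD r))) (fun i hi => ?_)
      simp only [h2 i (by omega)]

theorem ldG_eq (t k : ℕ) (hk : 1 ≤ k) (ht : k ≤ t) (r : ℕ) (hr : r + 1 ≤ k) :
    ∀ p, ldq (DG t k) r p = ldq (DH t k) r p := by
  induction r with
  | zero =>
    intro p
    exact sumG t k hk p (fun _ => (1:ℕ)) rfl
  | succ r ih =>
    intro p
    obtain ⟨L, h1, h2⟩ := ldH_eq t k ht r
    change (∑ q, DG t k p q • ({ldq (DG t k) r q} : Multiset (LD r))) =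
      (∑ q, DH t k p q • ({ldq (DH t k) r q} : Multiset (LD r)))
    simp only [ih (by omega), h1]
    exact sumG t k hk p (fun i => ({L i} : Multiset (LD r))) (by simp only [h2 1 (by omega)])

theorem DH_symm (t k : ℕ) (p q) : DH t k p q = DH t k q p := by
  simp only [DH, ww_symm t (clu p.2), eq_comm (a := p.1)]

theorem DG_symm (t k : ℕ) (p q) : DG t k p q = DG t k q p := by
  have : (clu p.2 = 0 ∧ p.2 = q.2) ↔ (clu q.2 = 0 ∧ q.2 = p.2) := by
    constructor
    · rintro ⟨h, h'⟩; rw [h'] at h; exact ⟨h, h'.symm⟩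
    · rintro ⟨h, h'⟩; rw [h'] at h; exact ⟨h, h'.symm⟩
  simp only [DG, ww_symm t (clu p.2), eq_comm (a := p.1), add_comm (clu p.2), this,
    and_comm (a := clu p.2 = 1)]

theorem ww_diag (t i : ℕ) : ww t i i = 0 := by
  rcases i with _ | i <;> simp [ww, bb]

theorem clu_le {t k : ℕ} (u : Fin t ⊕ Fin k) : clu u ≤ k := by
  rcases u with u | u
  · simp [clu]
  · have := u.2; simp only [clu]; omega

theorem ww_le (t k c : ℕ) (hc : t + k ≤ c) (hk : 1 ≤ k) (i j : ℕ) (hi : i ≤ k) (hj : j ≤ k) :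
    ww t i j ≤ c ^ k := by
  unfold ww
  split_ifs
  · exact bb_le t k c hc hk _ (by omega)
  · omega

theorem main_general (k c : ℕ) (hk : 1 ≤ k) (hc : 2 * k ≤ c) :
    ∃ (V : Type) (_ : Fintype V) (G H : SimpleGraph V),
      (∀ v : V, kdeg G (k - 1) v = kdeg H (k - 1) v) ∧
      (∃ M : Set (Sym2 V), IsMatchingSet G M ∧ M.ncard = (c / 2 + 1) * c ^ k) ∧
      (∃ C : Set V, (∀ e ∈ H.edgeSet, ∃ v ∈ C, v ∈ e) ∧ C.ncard ≤ 2 * k * c ^ k) := by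
  obtain ⟨t, ht⟩ : ∃ t, t = c / 2 := ⟨_, rfl⟩
  have htk : k ≤ t := by omega
  have htc : t + k ≤ c := by omega
  have hpow : c ≤ c ^ k := Nat.le_self_pow (by omega) c
  haveI : NeZero (c ^ k) := ⟨by omega⟩
  have hG0 : ∀ p, DG t k p p = 0 := by
    intro p
    simp [DG, ww_diag]
  have hH0 : ∀ p, DH t k p p = 0 := by
    intro p
    simp [DH, ww_diag]
  have hGM : ∀ p q, DG t k p q ≤ c ^ k := by
    intro p q
    have := ww_le t k c htc hk _ _ (clu_le p.2) (clu_le q.2)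
    unfold DG
    split_ifs <;> omega
  have hHM : ∀ p q, DH t k p q ≤ c ^ k := by
    intro p q
    have := ww_le t k c htc hk _ _ (clu_le p.2) (clu_le q.2)
    unfold DH
    split_ifs <;> omega
  refine ⟨(Bool × (Fin t ⊕ Fin k)) × ZMod (c ^ k), inferInstance,
    blow (c ^ k) (DG t k) (DG_symm t k) hG0, blow (c ^ k) (DH t k) (DH_symm t k) hH0, ?_, ?_, ?_⟩
  · intro v
    rw [kdeg_blow _ _ _ _ hGM, kdeg_blow _ _ _ _ hHM]
    exact ldG_eq t k hk htk _ (by omega) _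
  · let io : Option (Fin t) → Fin t ⊕ Fin k := fun o => o.elim (Sum.inr ⟨0, hk⟩) Sum.inl
    have hio : Function.Injective io := by
      intro a b h
      cases a <;> cases b <;> simp_all [io]
    let φ : Option (Fin t) × ZMod (c ^ k) → Sym2 ((Bool × (Fin t ⊕ Fin k)) × ZMod (c ^ k)) :=
      fun a => s(((false, io a.1), a.2), ((true, io a.1), -a.2))
    have hmem : ∀ a b v, v ∈ φ a → v ∈ φ b → a = b := by
      rintro ⟨a, x⟩ ⟨b, y⟩ v ha hb
      simp only [φ, Sym2.mem_iff] at ha hb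
      rcases ha with rfl | rfl <;> rcases hb with hb | hb <;> simp at hb
      · rw [hio hb.1, hb.2]
      · rw [hio hb.1, hb.2]
    refine ⟨Set.range φ, ⟨?_, ?_⟩, ?_⟩
    · rintro _ ⟨⟨a, x⟩, rfl⟩
      change (x + -x).val < DG t k (false, io a) (true, io a)
      rw [add_neg_cancel, ZMod.val_zero]
      cases a with
      | none => simp [DG, io, clu]; omega
      | some a => simp [DG, io, clu]
    · rintro _ ⟨a, rfl⟩ _ ⟨b, rfl⟩ hne v ⟨h1, h2⟩
      exact hne (by rw [hmem a b v h1 h2])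
    · have hinj : Function.Injective φ := by
        intro a b h
        refine hmem a b ((false, io a.1), a.2) ?_ ?_
        · simp [φ]
        · rw [← h]; simp [φ]
      rw [← Set.image_univ, Set.ncard_image_of_injective _ hinj, Set.ncard_univ, Nat.card_eq_fintype_card]
      simp [ZMod.card, ht]
  · refine ⟨Set.range (fun a : (Bool × Fin k) × ZMod (c ^ k) => ((a.1.1, Sum.inr a.1.2), a.2)), ?_, ?_⟩
    · intro e he
      induction e using Sym2.ind with
      | _ v w =>
        obtain ⟨⟨β, u⟩, x⟩ := v
        obtain ⟨⟨γ, u'⟩, y⟩ := w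
        have he' : (x + y).val < DH t k (β, u) (γ, u') := he
        rcases u with u | u
        · rcases u' with u' | u'
          · simp [DH, clu, ww_diag] at he'
          · exact ⟨_, ⟨((γ, u'), y), rfl⟩, by simp⟩
        · exact ⟨_, ⟨((β, u), x), rfl⟩, by simp⟩
    · rw [← Set.image_univ]
      refine (Set.ncard_image_le (Set.toFinite _)).trans ?_
      rw [Set.ncard_univ, Nat.card_eq_fintype_card]
      simp [ZMod.card]

/-- Main theorem. -/
theorem identical_kLevelDegrees_matching_vs_cover (k c : ℕ) (hk : 1 ≤ k) (hc : 2 * k ≤ c) :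
    ∃ (n : ℕ) (G H : SimpleGraph (Fin n)) (Φ : Fin n ≃ Fin n),
      (∀ v : Fin n, kdeg G (k - 1) v = kdeg H (k - 1) (Φ v)) ∧
      (∃ M : Set (Sym2 (Fin n)), IsMatchingSet G M ∧
        ((c : ℝ) + 1) * (c : ℝ) ^ k / 2 ≤ (M.ncard : ℝ)) ∧
      (∃ C : Set (Fin n), (∀ e ∈ H.edgeSet, ∃ v ∈ C, v ∈ e) ∧ C.ncard ≤ 2 * k * c ^ k) := by
  obtain ⟨V, _, G, H, h1, ⟨M, ⟨hM1, hM2⟩, hM3⟩, C, hC1, hC2⟩ := main_general k c hk hc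
  let e := (Fintype.equivFin V).symm
  have hinj : Function.Injective (Sym2.map e.symm) := Sym2.map.injective e.symm.injective
  refine ⟨Fintype.card V, G.comap e, H.comap e, Equiv.refl _, ?_, ?_, ?_⟩
  · intro v
    rw [kdeg_comap, kdeg_comap]
    exact h1 _
  · refine ⟨Sym2.map e.symm '' M, ⟨?_, ?_⟩, ?_⟩
    · rintro _ ⟨a, ha, rfl⟩
      have := hM1 ha
      induction a using Sym2.ind with
      | _ v w => simpa using this
    · rintro _ ⟨a, ha, rfl⟩ _ ⟨b, hb, rfl⟩ hne v ⟨hv1, hv2⟩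
      rw [Sym2.mem_map] at hv1 hv2
      obtain ⟨x, hx, rfl⟩ := hv1
      obtain ⟨y, hy, hxy⟩ := hv2
      rw [e.symm.injective hxy] at hy
      exact hM2 a ha b hb (fun h => hne (by rw [h])) x ⟨hx, hy⟩
    · rw [Set.ncard_image_of_injective _ hinj, hM3]
      have h2 : (c : ℝ) + 1 ≤ 2 * ((c / 2 : ℕ) + 1) := by
        have : c + 1 ≤ 2 * (c / 2 + 1) := by omega
        exact_mod_cast this
      have h3 : (0 : ℝ) ≤ (c : ℝ) ^ k := by positivity
      push_cast
      push_cast at h2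
      nlinarith
  · refine ⟨e.symm '' C, ?_, ?_⟩
    · intro a ha
      induction a using Sym2.ind with
      | _ v w =>
        obtain ⟨x, hx, hx2⟩ := hC1 s(e v, e w) (by simpa using ha)
        refine ⟨e.symm x, ⟨x, hx, rfl⟩, ?_⟩
        rw [Sym2.mem_iff] at hx2 ⊢
        rcases hx2 with rfl | rfl <;> simp
    · rw [Set.ncard_image_of_injective _ e.symm.injective]
      exact hC2
end

section
/- For all integers k ≥ 1 and c ≥ 2k, there exist finite simple graphs G and H and a bijection Φ from V(G) to V(H) such that d_k^G(v) = d_k^H(Φ(v)) for every vertex v of G, while ν(H) ≥ 1 and ν(G) ≥ ((c+1)/(4k)) · ν(H). -/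
open SimpleGraph

namespace LevelGap

/-- Iterated types of a colour-refinement system. -/
def FF {σ : Type*} (Nb : σ → Multiset σ) : (t : ℕ) → σ → LD t
  | 0, s => (Multiset.card (Nb s) : ℕ)
  | (t+1), s => ((Nb s).map (FF Nb t) : Multiset (LD t))

theorem kdeg_eq_FF {V σ : Type*} [Fintype V] (G : SimpleGraph V) (col : V → σ)
    (Nb : σ → Multiset σ)
    (h : ∀ v, ((G.neighborSet v).toFinite.toFinset.val).map col = Nb (col v)) :
    ∀ t v, kdeg G t v = FF Nb t (col v) := by
  intro t
  induction t with
  | zero =>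
    intro v
    have : (G.neighborSet v).ncard = Multiset.card (Nb (col v)) := by
      rw [← h v, Multiset.card_map, Set.ncard_eq_toFinset_card _ (G.neighborSet v).toFinite]
      rfl
    exact this
  | succ t ih =>
    intro v
    have : ((G.neighborSet v).toFinite.toFinset.val).map (kdeg G t)
        = (Nb (col v)).map (FF Nb t) := by
      rw [← h v, Multiset.map_map]
      exact Multiset.map_congr rfl (fun u _ => ih u)
    exact this

theorem kdeg_eq_FF_of_count {V σ : Type*} [Fintype V] [DecidableEq σ] (G : SimpleGraph V)
    (col : V → σ) (Nb : σ → Multiset σ)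
    (h : ∀ v s, {u | G.Adj v u ∧ col u = s}.ncard = (Nb (col v)).count s) :
    ∀ t v, kdeg G t v = FF Nb t (col v) := by
  apply kdeg_eq_FF
  intro v
  ext s
  rw [← h v s, Multiset.count_map, Set.ncard_eq_toFinset_card _ (Set.toFinite _)]
  rw [← Finset.filter_val, Finset.card_val]
  congr 1
  ext u
  simp [eq_comm]

/-- last index of a state -/
def lst : List ℕ → ℕ
  | [] => 0
  | l :: _ => l

def yy (b l : ℕ) : ℕ := if l ≤ 1 then 1 else b ^ (l - 1) - b ^ (l - 2)

def Val (k : ℕ) : List ℕ → Prop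
  | [] => True
  | l :: s => (lst s + 2 ≤ l ∨ (s = [] ∧ l = 1)) ∧ l ≤ k ∧ Val k s

def nn (b E : ℕ) : List ℕ → ℕ
  | [] => b ^ E
  | l :: s => nn b E s / b ^ l * yy b l

def par (g : Bool) : List ℕ → List ℕ
  | [] => if g then [] else [1]
  | l :: s => if l = 1 then (if g then [1] else []) else s

def Nb (g : Bool) (k b : ℕ) (s : List ℕ) : Multiset (List ℕ) :=
  Multiset.replicate (b ^ lst s) (par g s)
    + ∑ l ∈ Finset.Icc (lst s + 2) k, Multiset.replicate (yy b l) (l :: s)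

theorem map_Nb {α : Type*} (g : Bool) (k b : ℕ) (s : List ℕ) (f : List ℕ → α) :
    (Nb g k b s).map f = Multiset.replicate (b ^ lst s) (f (par g s))
    + ∑ l ∈ Finset.Icc (lst s + 2) k, Multiset.replicate (yy b l) (f (l :: s)) := by
  have : ∀ m : Multiset (List ℕ), m.map f = Multiset.mapAddMonoidHom f m := fun _ => rfl
  rw [this, Nb, map_add, map_sum]
  simp

theorem map_Nb_norm {α : Type*} (g : Bool) (k b : ℕ) (hb : 1 ≤ b) (s : List ℕ) (f : List ℕ → α)
    (T : α) (h0 : f (par g s) = T) (j : ℕ) (hj : lst s ≤ j) (hjk : j + 1 ≤ k)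
    (h : ∀ l, lst s + 2 ≤ l → l ≤ j + 1 → f (l :: s) = T) :
    (Nb g k b s).map f = Multiset.replicate (b ^ j) T
    + ∑ l ∈ Finset.Icc (j + 2) k, Multiset.replicate (yy b l) (f (l :: s)) := by
  induction j, hj using Nat.le_induction with
  | base => rw [map_Nb, h0]
  | succ j hj ih =>
    rw [ih (by omega) (fun l h1 h2 => h l h1 (by omega))]
    have e : Finset.Icc (j + 2) k = insert (j + 2) (Finset.Icc (j + 1 + 2) k) := by
      ext x; simp; omega
    rw [e, Finset.sum_insert (by simp), h (j + 2) (by omega) (by omega), ← add_assoc,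
      ← Multiset.replicate_add]
    congr 2
    have : b ^ j ≤ b ^ (j + 1) := Nat.pow_le_pow_right hb (by omega)
    simp [yy]
    omega

theorem lst_par {k : ℕ} (g : Bool) {s : List ℕ} (hs : Val k s) : lst (par g s) ≤ lst s + 1 := by
  cases s with
  | nil => cases g <;> simp [par, lst]
  | cons l s =>
    by_cases h : l = 1
    · cases g <;> simp [par, lst, h]
    · simp only [par, h, if_false]
      have := hs.1
      simp only [lst] at this ⊢
      omega

theorem val_par {k : ℕ} (hk : 1 ≤ k) (g : Bool) {s : List ℕ} (hs : Val k s) : Val k (par g s) := by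
  cases s with
  | nil => cases g <;> simp [par, Val, hk]
  | cons l s =>
    by_cases h : l = 1
    · cases g <;> simp [par, Val, h, hk]
    · simp only [par, h, if_false]
      exact hs.2.2

theorem FF_eq (k b : ℕ) (hk : 1 ≤ k) (hb : 1 ≤ b) : ∀ (t : ℕ) (g g' : Bool) (x x' w : List ℕ),
    Val k x → Val k x' → (∀ a ∈ w, 2 ≤ a) →
    lst x + t + 1 ≤ w.length + k → lst x' + t + 1 ≤ w.length + k →
    FF (Nb g k b) t (w ++ x) = FF (Nb g' k b) t (w ++ x') := by
  intro t
  induction t with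
  | zero =>
    intro g g' x x' w hx hx' hw h h'
    suffices hh : Multiset.card (Nb g k b (w ++ x)) = Multiset.card (Nb g' k b (w ++ x')) from hh
    rw [← Multiset.card_map (fun _ => ()), ← Multiset.card_map (fun _ => ()) (Nb g' _ _ _)]
    congr 1
    cases w with
    | nil =>
      simp only [List.nil_append, List.length_nil] at *
      rw [map_Nb_norm g k b hb x _ () rfl (max (lst x) (lst x')) (by omega) (by omega)
        (fun _ _ _ => rfl),
        map_Nb_norm g' k b hb x' _ () rfl (max (lst x) (lst x')) (by omega) (by omega)
        (fun _ _ _ => rfl)]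
    | cons a w => rw [map_Nb, map_Nb]; rfl
  | succ t ih =>
    intro g g' x x' w hx hx' hw h h'
    suffices hh : (Nb g k b (w ++ x)).map (FF (Nb g k b) t)
      = (Nb g' k b (w ++ x')).map (FF (Nb g' k b) t) from hh
    cases w with
    | nil =>
      simp only [List.nil_append, List.length_nil] at *
      have hp := lst_par g hx
      have hp' := lst_par g' hx'
      have vp := val_par hk g hx
      have vp' := val_par hk g' hx'
      have e0 : FF (Nb g k b) t (par g x) = FF (Nb g' k b) t (par g' x') :=
        ih g g' (par g x) (par g' x') [] vp vp' (by simp) (by simp; omega) (by simp; omega)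
      rw [map_Nb_norm g k b hb x _ (FF (Nb g k b) t (par g x)) rfl
          (max (lst x) (lst x')) (by omega) (by omega) ?_,
        map_Nb_norm g' k b hb x' _ (FF (Nb g k b) t (par g x)) e0.symm
          (max (lst x) (lst x')) (by omega) (by omega) ?_]
      · congr 1
        apply Finset.sum_congr rfl
        intro l hl
        rw [Finset.mem_Icc] at hl
        congr 1
        exact ih g g' x x' [l] hx hx' (by simp; omega) (by simp; omega) (by simp; omega)
      · intro l h1 h2
        refine ih g' g (l :: x') (par g x) [] ⟨Or.inl h1, by omega, hx'⟩ vp (by simp) ?_ ?_ <;>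
        simp only [List.length_nil, show ∀ z : List ℕ, lst (l :: z) = l from fun _ => rfl] <;> omega
      · intro l h1 h2
        refine ih g g (l :: x) (par g x) [] ⟨Or.inl h1, by omega, hx⟩ vp (by simp) ?_ ?_ <;>
        simp only [List.length_nil, show ∀ z : List ℕ, lst (l :: z) = l from fun _ => rfl] <;> omega
    | cons a w =>
      have ha : 2 ≤ a := hw a (by simp)
      have ha1 : a ≠ 1 := by omega
      have hw' : ∀ a ∈ w, 2 ≤ a := fun c hc => hw c (by simp [hc])
      simp only [List.length_cons] at h h'
      rw [map_Nb, map_Nb]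
      simp only [List.cons_append, lst, par, ha1, if_false]
      congr 1
      · rw [ih g g' x x' w hx hx' hw' (by omega) (by omega)]
      · apply Finset.sum_congr rfl
        intro l hl
        rw [Finset.mem_Icc] at hl
        congr 1
        refine ih g g' x x' (l :: a :: w) hx hx' ?_ ?_ ?_
        · intro c hc
          rcases List.mem_cons.1 hc with rfl | hc
          · omega
          · exact hw c hc
        · simp; omega
        · simp; omega

theorem val_split {k : ℕ} {s : List ℕ} (hs : Val k s) :
    (∀ a ∈ s, 2 ≤ a) ∨ ∃ w, s = w ++ [1] ∧ ∀ a ∈ w, 2 ≤ a := by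
  induction s with
  | nil => left; simp
  | cons l s ih =>
    obtain ⟨h1, h2, h3⟩ := hs
    rcases h1 with h1 | ⟨rfl, rfl⟩
    · rcases ih h3 with h | ⟨w, rfl, h⟩
      · left
        intro a ha
        rcases List.mem_cons.1 ha with rfl | ha
        · omega
        · exact h a ha
      · right
        refine ⟨l :: w, rfl, ?_⟩
        intro a ha
        rcases List.mem_cons.1 ha with rfl | ha
        · omega
        · exact h a ha
    · right; exact ⟨[], rfl, by simp⟩

theorem FF_final (k b : ℕ) (hk : 1 ≤ k) (hb : 1 ≤ b) (s : List ℕ) (hs : Val k s) :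
    FF (Nb true k b) (k - 1) s = FF (Nb false k b) (k - 1) s := by
  have v1 : Val k [1] := ⟨Or.inr ⟨rfl, rfl⟩, hk, trivial⟩
  rcases val_split hs with h | ⟨w, rfl, h⟩
  · have := FF_eq k b hk hb (k - 1) true false [] [] s trivial trivial h
      (by simp [lst]; omega) (by simp [lst]; omega)
    simpa using this
  · by_cases hw : w = []
    · subst hw
      change FF (Nb true k b) (k - 1) [1] = FF (Nb false k b) (k - 1) [1]
      obtain ⟨m, rfl⟩ : ∃ m, k = m + 1 := ⟨k - 1, by omega⟩
      change FF (Nb true (m + 1) b) m [1] = FF (Nb false (m + 1) b) m [1]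
      cases m with
      | zero =>
        suffices hh : Multiset.card (Nb true 1 b [1]) = Multiset.card (Nb false 1 b [1]) from hh
        rw [← Multiset.card_map (fun _ => ()), ← Multiset.card_map (fun _ => ()) (Nb false _ _ _),
          map_Nb, map_Nb]
      | succ t =>
        suffices hh : (Nb true (t + 2) b [1]).map (FF (Nb true (t + 2) b) t)
          = (Nb false (t + 2) b [1]).map (FF (Nb false (t + 2) b) t) from hh
        rw [map_Nb, map_Nb]
        congr 1
        · congr 1
          exact FF_eq (t + 2) b hk hb t true false [1] [] [] v1 trivial (by simp)
            (by simp [lst]; omega) (by simp [lst]; try omega)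
        · apply Finset.sum_congr rfl
          intro l hl
          rw [Finset.mem_Icc] at hl
          congr 1
          exact FF_eq (t + 2) b hk hb t true false [1] [1] [l] v1 v1 (by simp [lst] at *; omega)
            (by simp only [lst, List.length]; omega) (by simp only [lst, List.length]; omega)
    · have : 0 < w.length := List.length_pos_iff.2 hw
      exact FF_eq k b hk hb (k - 1) true false [1] [1] w v1 v1 h
        (by simp [lst]; omega) (by simp [lst]; omega)

theorem finite_val (k : ℕ) : {s | Val k s}.Finite := by
  have h1 : ∀ s, Val k s → lst s ≤ k ∧ s.length ≤ lst s ∧ ∀ x ∈ s, x ≤ k := by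
    intro s
    induction s with
    | nil => intro _; simp [lst]
    | cons l s ih =>
      intro ⟨h1, h2, h3⟩
      have := ih h3
      refine ⟨h2, ?_, ?_⟩
      · rcases h1 with h1 | ⟨rfl, rfl⟩
        · simp [lst]; omega
        · simp [lst]
      · intro x hx
        rcases List.mem_cons.1 hx with rfl | hx
        · exact h2
        · exact this.2.2 x hx
  apply ((List.finite_length_le (Fin (k + 1)) k).image (List.map Fin.val)).subset
  intro s hs
  obtain ⟨a, c, d⟩ := h1 s hs
  refine ⟨s.pmap (fun x hx => ⟨x, hx⟩) (fun x hx => Nat.lt_succ_of_le (d x hx)), ?_, ?_⟩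
  · simp; omega
  · rw [List.map_pmap]; simp

theorem length_le {k : ℕ} {s : List ℕ} (hs : Val k s) : s.length ≤ lst s ∧ lst s ≤ k := by
  induction s with
  | nil => simp [lst]
  | cons l s ih =>
    obtain ⟨h1, h2, h3⟩ := hs
    have := ih h3
    refine ⟨?_, h2⟩
    rcases h1 with h1 | ⟨rfl, rfl⟩
    · simp [lst]; omega
    · simp [lst]

theorem nn_dvd' {k b : ℕ} (s : List ℕ) (hs : Val k s) :
    b ^ (3 * k - 2 * s.length) ∣ nn b (3 * k) s := by
  induction s with
  | nil => simp [nn]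
  | cons l s ih =>
    obtain ⟨h1, h2, h3⟩ := hs
    have hl : s.length + 1 ≤ l := by
      rcases h1 with h1 | ⟨rfl, rfl⟩
      · have := length_le h3; omega
      · simp
    obtain ⟨m, hm⟩ := ih h3
    simp only [nn, List.length_cons]
    rcases Nat.eq_zero_or_pos b with rfl | hb
    · rw [hm, zero_pow (M₀ := ℕ) (n := 3 * k - 2 * s.length) (by omega), zero_mul, Nat.zero_div,
        zero_mul]
      exact dvd_zero _
    have e1 : b ^ (3 * k - 2 * s.length) = b ^ l * b ^ (3 * k - 2 * s.length - l) := by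
      rw [← pow_add]; congr 1; omega
    rw [hm, e1, mul_assoc, Nat.mul_div_cancel_left _ (Nat.pow_pos hb)]
    rcases Nat.lt_or_ge l 2 with h | h
    · have : l = 1 := by omega
      subst this
      refine Dvd.dvd.mul_right (Dvd.dvd.mul_right (pow_dvd_pow _ ?_) _) _
      omega
    · have e2 : yy b l = b ^ (l - 2) * (b - 1) := by
        rw [yy, if_neg (by omega), Nat.mul_sub, mul_one, ← pow_succ]
        congr 2; omega
      have e3 : b ^ (3 * k - 2 * (s.length + 1))
          = b ^ (3 * k - 2 * s.length - l) * b ^ (l - 2) := by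
        rw [← pow_add]; congr 1; omega
      rw [e2, e3]
      exact ⟨m * (b - 1), by ring⟩

theorem nn_dvd {k b : ℕ} (s : List ℕ) (hs : Val k s) (l : ℕ) (hl : l ≤ k) :
    b ^ l ∣ nn b (3 * k) s := by
  refine dvd_trans (pow_dvd_pow _ ?_) (nn_dvd' s hs)
  have := length_le hs
  omega

theorem yy_le (b l : ℕ) (hl : 1 ≤ l) : yy b l ≤ b ^ (l - 1) := by
  unfold yy
  split_ifs with h
  · have : l = 1 := by omega
    subst this; simp
  · omega

theorem yy_pos (b l : ℕ) (hb : 2 ≤ b) : 0 < yy b l := by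
  unfold yy
  split_ifs with h
  · simp
  · have : b ^ (l - 2) < b ^ (l - 1) := Nat.pow_lt_pow_right hb (by omega)
    omega

theorem nn_cons_le {k b E : ℕ} (l : ℕ) (s : List ℕ) (hb : 0 < b) (hs : Val k (l :: s)) :
    nn b E (l :: s) * b ≤ nn b E s := by
  have hl : 1 ≤ l := by rcases hs.1 with h | h <;> omega
  calc nn b E (l :: s) * b = nn b E s / b ^ l * (yy b l * b) := by simp [nn, mul_assoc]
    _ ≤ nn b E s / b ^ l * (b ^ (l - 1) * b) := by gcongr; exact yy_le b l hl
    _ = nn b E s / b ^ l * b ^ l := by rw [← pow_succ]; congr 2; omega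
    _ ≤ _ := Nat.div_mul_le_self _ _

theorem nn_le {k b E : ℕ} (s : List ℕ) (hb : 0 < b) (hs : Val k s) :
    nn b E s ≤ b ^ E := by
  induction s with
  | nil => simp [nn]
  | cons l s ih =>
    have := nn_cons_le (E := E) l s hb hs
    have := ih hs.2.2
    nlinarith

theorem nn_le' {k b E : ℕ} (s : List ℕ) (hb : 0 < b) (hs : Val k s) (h : s ≠ []) :
    nn b E s ≤ b ^ E / b := by
  cases s with
  | nil => exact absurd rfl h
  | cons l s =>
    rw [Nat.le_div_iff_mul_le hb]
    exact (nn_cons_le l s hb hs).trans (nn_le s hb hs.2.2)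

abbrev W := List ℕ × ℕ × Bool

def SS (k b : ℕ) : Set W := {v | Val k v.1 ∧ v.2.1 < nn b (3 * k) v.1}

def TT (g : Bool) (b : ℕ) (v u : W) : Prop :=
  ∃ l, v.1 = l :: u.1 ∧ (l ≠ 1 ∨ g = false) ∧ v.2.1 / yy b l = u.2.1 / b ^ l ∧ v.2.2 = u.2.2

def XX (g : Bool) (b : ℕ) (v u : W) : Prop :=
  g = true ∧ v.1 = u.1 ∧ (v.1 = [] ∨ v.1 = [1]) ∧
    v.2.1 / b ^ (lst v.1) = u.2.1 / b ^ (lst v.1) ∧ v.2.2 ≠ u.2.2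

def AA (g : Bool) (b : ℕ) (v u : W) : Prop := TT g b v u ∨ TT g b u v ∨ XX g b v u

theorem AA_symm (g : Bool) (b : ℕ) (v u : W) (h : AA g b v u) : AA g b u v := by
  rcases h with h | h | ⟨h1, h2, h3, h4, h5⟩
  · exact Or.inr (Or.inl h)
  · exact Or.inl h
  · exact Or.inr (Or.inr ⟨h1, h2.symm, h2 ▸ h3, by rw [← h2]; exact h4.symm, h5.symm⟩)

theorem AA_irrefl (g : Bool) (b : ℕ) (v : W) : ¬ AA g b v v := by
  rintro (⟨l, h, _⟩ | ⟨l, h, _⟩ | h)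
  · simp at h
  · simp at h
  · exact h.2.2.2.2 rfl

theorem blk (s : List ℕ) (m d q n : ℕ) (β : Bool) (hn : n = m * d) (hq : q < m) (hd : 0 < d) :
    {u : W | u.1 = s ∧ u.2.1 < n ∧ u.2.1 / d = q ∧ u.2.2 = β}.ncard = d := by
  have e : {u : W | u.1 = s ∧ u.2.1 < n ∧ u.2.1 / d = q ∧ u.2.2 = β}
      = (fun i => ((s, i, β) : W)) '' (Finset.Ico (q * d) (q * d + d) : Finset ℕ) := by
    ext ⟨s', i, β'⟩
    have key : (i < n ∧ i / d = q) ↔ (q * d ≤ i ∧ i < q * d + d) := by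
      subst hn
      rw [Nat.div_eq_iff hd]
      constructor
      · rintro ⟨h1, h2, h3⟩; constructor <;> omega
      · rintro ⟨h1, h2⟩
        have : (q + 1) * d ≤ m * d := Nat.mul_le_mul_right d hq
        rw [add_mul, one_mul] at this
        refine ⟨?_, ?_, ?_⟩ <;> omega
    simp only [Set.mem_ofPred_eq, Set.mem_image, Finset.coe_Ico, Set.mem_Ico, Prod.mk.injEq]
    constructor
    · rintro ⟨rfl, h1, h2, rfl⟩
      exact ⟨i, key.1 ⟨h1, h2⟩, rfl, rfl, rfl⟩
    · rintro ⟨j, h, rfl, rfl, rfl⟩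
      exact ⟨rfl, (key.2 h).1, (key.2 h).2, rfl⟩
  rw [e, Set.ncard_image_of_injective, Set.ncard_coe_finset]
  · simp
  · intro a c h; simpa using h

theorem par_ne (g : Bool) (s : List ℕ) (l : ℕ) (hl : 2 ≤ l) : par g s ≠ l :: s := by
  intro h
  cases s with
  | nil => cases g <;> simp [par] at h; omega
  | cons a s =>
    have := congrArg List.length h
    simp only [par] at this
    split_ifs at this <;> simp at this <;> omega

theorem count_child (g : Bool) (k b : ℕ) (s : List ℕ) (l : ℕ) (h1 : lst s + 2 ≤ l) (h2 : l ≤ k) :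
    (Nb g k b s).count (l :: s) = yy b l := by
  rw [Nb, Multiset.count_add, Multiset.count_sum', Multiset.count_replicate,
    if_neg (par_ne g s l (by omega)), Finset.sum_eq_single l]
  · simp
  · intro a _ ha; simp [Multiset.count_replicate, ha]
  · intro h; exact absurd (Finset.mem_Icc.2 ⟨h1, h2⟩) h

theorem count_par (g : Bool) (k b : ℕ) (s : List ℕ) :
    (Nb g k b s).count (par g s) = b ^ lst s := by
  rw [Nb, Multiset.count_add, Multiset.count_sum', Multiset.count_replicate, if_pos rfl,
    Finset.sum_eq_zero, add_zero]
  intro l hl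
  rw [Finset.mem_Icc] at hl
  rw [Multiset.count_replicate, if_neg (par_ne g s l (by omega)).symm]

theorem count_none (g : Bool) (k b : ℕ) (s s' : List ℕ) (h0 : s' ≠ par g s)
    (h : ∀ l, lst s + 2 ≤ l → l ≤ k → s' ≠ l :: s) :
    (Nb g k b s).count s' = 0 := by
  rw [Nb, Multiset.count_add, Multiset.count_sum', Multiset.count_replicate, if_neg h0.symm,
    zero_add]
  apply Finset.sum_eq_zero
  intro l hl
  rw [Finset.mem_Icc] at hl
  rw [Multiset.count_replicate, if_neg (h l hl.1 hl.2).symm]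

theorem AA_count (g : Bool) (k b : ℕ) (hk : 1 ≤ k) (hb : 2 ≤ b) (v : W) (hv : v ∈ SS k b)
    (s' : List ℕ) :
    {u | u ∈ SS k b ∧ AA g b v u ∧ u.1 = s'}.ncard = (Nb g k b v.1).count s' := by
  obtain ⟨s, i, β⟩ := v
  obtain ⟨hs, hi⟩ := hv
  simp only at hs hi ⊢
  have hbpos : ∀ e, 0 < b ^ e := fun e => Nat.pow_pos (by omega)
  have hlk := (length_le hs).2
  have v1 : Val k [1] := ⟨Or.inr ⟨rfl, rfl⟩, hk, trivial⟩
  have hq : ∀ l, l ≤ k → i / b ^ l < nn b (3 * k) s / b ^ l := fun l hl =>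
    Nat.div_lt_div_of_lt_of_dvd (nn_dvd s hs l hl) hi
  by_cases hA : ∃ l, lst s + 2 ≤ l ∧ l ≤ k ∧ s' = l :: s
  · obtain ⟨l, h1, h2, rfl⟩ := hA
    rw [count_child g k b s l h1 h2,
      ← blk (l :: s) (nn b (3 * k) s / b ^ l) (yy b l) (i / b ^ l) (nn b (3 * k) (l :: s)) β
        rfl (hq l h2) (yy_pos b l hb)]
    congr 1
    ext ⟨t, j, γ⟩
    simp only [Set.mem_ofPred_eq, SS, AA, TT, XX]
    constructor
    · rintro ⟨⟨a1, a2⟩, h, rfl⟩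
      rcases h with ⟨m, e, _⟩ | ⟨m, e, a, c, d⟩ | ⟨_, e, _⟩
      · have := congrArg List.length e; simp at this; omega
      · have : l = m := by simpa using e
        subst this
        exact ⟨rfl, a2, c, d⟩
      · simp at e
    · rintro ⟨rfl, a2, c, d⟩
      exact ⟨⟨⟨Or.inl h1, h2, hs⟩, a2⟩, Or.inr (Or.inl ⟨l, rfl, Or.inl (by omega), c, d⟩), rfl⟩
  by_cases hB : s' = par g s
  · subst hB
    rw [count_par]
    -- the extra edges
    have hX : (s = [] ∨ s = [1]) → g = true →
        {u | u ∈ SS k b ∧ AA g b (s, i, β) u ∧ u.1 = par g s}.ncard = b ^ lst s := by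
      intro h hg
      subst hg
      have hp : par true s = s := by rcases h with rfl | rfl <;> simp [par]
      rw [hp]
      rw [← blk s (nn b (3 * k) s / b ^ lst s) (b ^ lst s) (i / b ^ lst s) (nn b (3 * k) s) (!β)
        (Nat.div_mul_cancel (nn_dvd s hs _ hlk)).symm (hq _ hlk) (hbpos _)]
      congr 1
      ext ⟨t, j, γ⟩
      simp only [Set.mem_ofPred_eq, SS, AA, TT, XX]
      constructor
      · rintro ⟨⟨a1, a2⟩, h, rfl⟩
        rcases h with ⟨m, e, _⟩ | ⟨m, e, _⟩ | ⟨_, e, _, c, d⟩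
        · simp at e
        · simp at e
        · refine ⟨rfl, a2, c.symm, ?_⟩
          cases β <;> cases γ <;> simp_all
      · rintro ⟨rfl, a2, c, rfl⟩
        exact ⟨⟨hs, a2⟩, Or.inr (Or.inr ⟨trivial, rfl, h, c.symm, by simp⟩), rfl⟩
    -- the tree edges
    have hT : ∀ l s0, s = l :: s0 → par g s = s0 → (l ≠ 1 ∨ g = false) →
        {u | u ∈ SS k b ∧ AA g b (s, i, β) u ∧ u.1 = par g s}.ncard = b ^ lst s := by
      rintro l s0 rfl hp hl
      rw [hp]
      have hs0 : Val k s0 := hs.2.2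
      have hl2 : l ≤ k := hs.2.1
      have hlt : i / yy b l < nn b (3 * k) s0 / b ^ l := by
        rw [Nat.div_lt_iff_lt_mul (yy_pos b l hb)]
        exact hi
      rw [show lst (l :: s0) = l from rfl, ← blk s0 (nn b (3 * k) s0 / b ^ l) (b ^ l)
        (i / yy b l) (nn b (3 * k) s0) β
        (Nat.div_mul_cancel (nn_dvd s0 hs0 _ hl2)).symm hlt (hbpos _)]
      congr 1
      ext ⟨t, j, γ⟩
      simp only [Set.mem_ofPred_eq, SS, AA, TT, XX]
      constructor
      · rintro ⟨⟨a1, a2⟩, h, rfl⟩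
        rcases h with ⟨m, e, _, c, d⟩ | ⟨m, e, _⟩ | ⟨_, e, _⟩
        · have : l = m := by simpa using e
          subst this
          exact ⟨rfl, a2, c.symm, d.symm⟩
        · have := congrArg List.length e; simp at this; omega
        · simp at e
      · rintro ⟨rfl, a2, c, rfl⟩
        exact ⟨⟨hs0, a2⟩, Or.inl ⟨l, rfl, hl, c.symm, rfl⟩, rfl⟩
    cases s with
    | nil =>
      cases g with
      | true => exact hX (Or.inl rfl) rfl
      | false =>
        have y1 : yy b 1 = b ^ lst [] := by simp [yy, lst]
        simp only [par]
        rw [← y1, ← blk [1] (nn b (3 * k) [] / b ^ 1) (yy b 1) (i / b ^ 1) (nn b (3 * k) [1]) β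
          rfl (hq 1 hk) (yy_pos b 1 hb)]
        congr 1
        ext ⟨t, j, γ⟩
        simp only [Set.mem_ofPred_eq, SS, AA, TT, XX]
        constructor
        · rintro ⟨⟨a1, a2⟩, h, rfl⟩
          rcases h with ⟨m, e, _⟩ | ⟨m, e, a, c, d⟩ | ⟨_, e, _⟩
          · simp at e
          · have : 1 = m := by simpa using e
            subst this
            exact ⟨rfl, a2, c, d⟩
          · simp at e
        · rintro ⟨rfl, a2, c, d⟩
          exact ⟨⟨v1, a2⟩, Or.inr (Or.inl ⟨1, rfl, Or.inr (by trivial), c, d⟩), rfl⟩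
    | cons l s0 =>
      by_cases hl : l = 1
      · subst hl
        have : s0 = [] := by rcases hs.1 with h | h <;> [omega; exact h.1]
        subst this
        cases g with
        | true => exact hX (Or.inr rfl) rfl
        | false => exact hT 1 [] rfl rfl (Or.inr rfl)
      · exact hT l s0 rfl (by simp [par, hl]) (Or.inl hl)
  · push Not at hA
    rw [count_none g k b s s' hB hA]
    convert Set.ncard_empty W
    rw [Set.eq_empty_iff_forall_notMem]
    rintro ⟨t, j, γ⟩ ⟨⟨a1, a2⟩, h, rfl⟩
    simp only [AA, TT, XX] at *
    rcases h with ⟨m, e, hm, c, d⟩ | ⟨m, e, hm, _⟩ | ⟨rfl, rfl, h, _⟩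
    · apply hB
      subst e
      rcases hm with hm | hm
      · simp [par, hm]
      · by_cases h1 : m = 1
        · subst h1
          rcases hs.1 with h | h
          · omega
          · simp [par, hm, h.1]
        · simp [par, h1]
    · subst e
      rcases a1.1 with h | ⟨rfl, rfl⟩
      · exact hA m h a1.2.1 rfl
      · apply hB
        rcases hm with hm | rfl
        · exact absurd rfl hm
        · simp [par]
    · apply hB
      rcases h with rfl | rfl <;> simp [par]

theorem matching_bdd {V : Type*} [Finite V] (G : SimpleGraph V) :
    BddAbove {n | ∃ M : Set (Sym2 V), IsMatchingSet G M ∧ M.ncard = n} := by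
  refine ⟨Nat.card (Sym2 V), ?_⟩
  rintro n ⟨M, _, rfl⟩
  rw [← Set.ncard_univ]
  exact Set.ncard_le_ncard (Set.subset_univ _)

theorem le_matching {V : Type*} [Finite V] (G : SimpleGraph V) (M : Set (Sym2 V))
    (h : IsMatchingSet G M) : M.ncard ≤ matchingNumber G :=
  le_csSup (matching_bdd G) ⟨M, h, rfl⟩

theorem matching_le {V : Type*} [Finite V] (G : SimpleGraph V) (C : Set V)
    (h : ∀ u v, G.Adj u v → u ∈ C ∨ v ∈ C) : matchingNumber G ≤ C.ncard := by
  apply csSup_le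
  · exact ⟨0, ∅, ⟨by simp, by simp⟩, by simp⟩
  · rintro n ⟨M, ⟨h1, h2⟩, rfl⟩
    have : ∀ e ∈ M, ∃ v, v ∈ C ∧ v ∈ e := by
      intro e he
      have := h1 he
      induction e using Sym2.ind with
      | _ x y =>
        rw [SimpleGraph.mem_edgeSet] at this
        rcases h x y this with h | h
        · exact ⟨x, h, by simp⟩
        · exact ⟨y, h, by simp⟩
    rcases isEmpty_or_nonempty V with hV | hV
    · have : M = ∅ := by
        rw [Set.eq_empty_iff_forall_notMem]
        intro e he
        obtain ⟨v, _⟩ := this e he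
        exact hV.elim v
      simp [this]
    choose! f hf using this
    refine Set.ncard_le_ncard_of_injOn f (fun e he => (hf e he).1) ?_
    intro e he e' he' hee
    by_contra hne
    exact h2 e he e' he' hne (f e) ⟨(hf e he).2, hee ▸ (hf e' he').2⟩

theorem SS_finite (k b : ℕ) (hb : 0 < b) : (SS k b).Finite := by
  apply ((finite_val k).prod ((Set.finite_Iio (b ^ (3 * k))).prod
    (Set.finite_univ (α := Bool)))).subset
  rintro ⟨s, i, β⟩ ⟨h1, h2⟩
  exact ⟨h1, lt_of_lt_of_le h2 (nn_le s hb h1), trivial⟩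

/-- the graph on `Fin n` -/
def gr (g : Bool) (b : ℕ) {n : ℕ} (f : Fin n → W) : SimpleGraph (Fin n) where
  Adj x y := AA g b (f x) (f y)
  symm := ⟨fun _ _ h => AA_symm g b _ _ h⟩
  loopless := ⟨fun x h => AA_irrefl g b (f x) h⟩

theorem gr_kdeg (g : Bool) (k b : ℕ) (hk : 1 ≤ k) (hb : 2 ≤ b) {n : ℕ} (f : Fin n → W)
    (hf : Function.Injective f) (hr : Set.range f = SS k b) (t : ℕ) (v : Fin n) :
    kdeg (gr g b f) t v = FF (Nb g k b) t (f v).1 := by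
  apply kdeg_eq_FF_of_count (gr g b f) (fun v => (f v).1)
  intro v s
  rw [← AA_count g k b hk hb (f v) (hr ▸ ⟨v, rfl⟩) s, ← Set.ncard_image_of_injective _ hf]
  congr 1
  ext w
  simp only [← hr, Set.mem_image, Set.mem_ofPred_eq, gr]
  constructor
  · rintro ⟨x, ⟨h1, h2⟩, rfl⟩; exact ⟨⟨x, rfl⟩, h1, h2⟩
  · rintro ⟨⟨x, rfl⟩, h1, h2⟩; exact ⟨x, ⟨h1, h2⟩, rfl⟩

theorem main (k R : ℕ) (hk : 1 ≤ k) : ∃ (n : ℕ) (G H : SimpleGraph (Fin n)),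
    (∀ v, kdeg G (k - 1) v = kdeg H (k - 1) v) ∧ 1 ≤ matchingNumber H ∧
    (R + 1) * matchingNumber H ≤ matchingNumber G := by
  set T := {s | Val k s}.ncard with hT
  have hTpos : 0 < T := by
    rw [hT, Set.ncard_pos (finite_val k)]
    exact ⟨[], trivial⟩
  obtain ⟨b, hbdef⟩ : ∃ b, b = 2 * T * (R + 1) := ⟨_, rfl⟩
  have hb : 2 ≤ b := by rw [hbdef]; nlinarith [Nat.zero_le (T * R)]
  have hb0 : 0 < b := by omega
  have hfin := SS_finite k b hb0
  have : Finite (SS k b) := hfin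
  obtain ⟨n, ⟨e⟩⟩ := Finite.exists_equiv_fin (SS k b)
  let f : Fin n → W := fun x => (e.symm x).1
  have hf : Function.Injective f := fun x y h => e.symm.injective (Subtype.ext h)
  have hr : Set.range f = SS k b := by
    ext w
    constructor
    · rintro ⟨x, rfl⟩; exact (e.symm x).2
    · intro h; exact ⟨e ⟨w, h⟩, by simp [f]⟩
  have hmem : ∀ x, f x ∈ SS k b := fun x => hr ▸ ⟨x, rfl⟩
  have hsurj : ∀ w ∈ SS k b, ∃ x, f x = w := fun w hw => by rwa [← hr] at hw
  have v1 : Val k [1] := ⟨Or.inr ⟨rfl, rfl⟩, hk, trivial⟩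
  refine ⟨n, gr true b f, gr false b f, ?_, ?_, ?_⟩
  · intro v
    rw [gr_kdeg true k b hk hb f hf hr, gr_kdeg false k b hk hb f hf hr]
    exact FF_final k b hk (by omega) _ (hmem v).1
  · have p1 : 0 < nn b (3 * k) [1] := by
      simp only [nn]
      refine Nat.mul_pos (Nat.div_pos ?_ (Nat.pow_pos hb0)) (yy_pos b 1 hb)
      exact Nat.pow_le_pow_right hb0 (by omega)
    obtain ⟨x, hx⟩ := hsurj ([], 0, true) ⟨trivial, Nat.pow_pos hb0⟩
    obtain ⟨y, hy⟩ := hsurj ([1], 0, true) ⟨v1, p1⟩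
    have hadj : (gr false b f).Adj y x := by
      simp only [gr, hx, hy]
      exact Or.inl ⟨1, rfl, Or.inr rfl, by simp, rfl⟩
    have := le_matching (gr false b f) {s(y, x)} ⟨by simpa using hadj, by simp⟩
    simpa using this
  · have hup : matchingNumber (gr false b f) ≤ T * (b ^ (3 * k) / b * 2) := by
      refine (matching_le _ {x | (f x).1 ≠ []} ?_).trans ?_
      · intro u v h
        rcases h with ⟨m, e, _⟩ | ⟨m, e, _⟩ | ⟨h, _⟩
        · left; simp [e]
        · right; simp [e]
        · simp at h
      · rw [← Set.ncard_image_of_injective _ hf]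
        have hc : ({s | Val k s} ×ˢ (Set.Iio (b ^ (3 * k) / b) ×ˢ (Set.univ : Set Bool))).ncard
            = T * (b ^ (3 * k) / b * 2) := by
          rw [Set.ncard_prod, Set.ncard_prod, Set.ncard_univ]
          congr 2
          · rw [← Finset.coe_Iio, Set.ncard_coe_finset, Nat.card_Iio]
          · simp
        rw [← hc]
        apply Set.ncard_le_ncard
        · rintro _ ⟨x, hx, rfl⟩
          have := hmem x
          exact ⟨this.1, lt_of_lt_of_le this.2 (nn_le' _ hb0 this.1 hx), trivial⟩
        · exact (finite_val k).prod ((Set.finite_Iio _).prod Set.finite_univ)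
    have hlow : b ^ (3 * k) ≤ matchingNumber (gr true b f) := by
      have hex : ∀ (β : Bool) (i : ℕ), ∃ x, i < b ^ (3 * k) → f x = ([], i, β) := by
        intro β i
        by_cases hi : i < b ^ (3 * k)
        · obtain ⟨x, hx⟩ := hsurj ([], i, β) ⟨trivial, hi⟩
          exact ⟨x, fun _ => hx⟩
        · obtain ⟨x, hx⟩ := hsurj ([], 0, β) ⟨trivial, Nat.pow_pos hb0⟩
          exact ⟨x, fun h => absurd h hi⟩
      choose p hp using hex
      have key : ∀ i < b ^ (3 * k), ∀ x, x ∈ s(p true i, p false i) → (f x).2.1 = i := by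
        intro i hi x hx
        rcases Sym2.mem_iff.1 hx with rfl | rfl <;> simp [hp _ i hi]
      have := le_matching (gr true b f)
        ((fun i => s(p true i, p false i)) '' (Set.Iio (b ^ (3 * k)))) ⟨?_, ?_⟩
      · rw [Set.ncard_image_of_injOn] at this
        · rwa [← Finset.coe_Iio, Set.ncard_coe_finset, Nat.card_Iio] at this
        · intro i hi j hj hij
          rw [← key i hi (p true i) (by simp)]
          apply key j hj
          simp only at hij
          rw [← hij]; simp
      · rintro _ ⟨i, hi, rfl⟩
        rw [SimpleGraph.mem_edgeSet]
        simp only [gr, hp _ i hi]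
        exact Or.inr (Or.inr ⟨rfl, rfl, Or.inl rfl, rfl, by simp⟩)
      · rintro _ ⟨i, hi, rfl⟩ _ ⟨j, hj, rfl⟩ hne x ⟨hx, hx'⟩
        apply hne
        have h1 := key i hi x hx
        have h2 := key j hj x hx'
        rw [h1] at h2
        rw [h2]
    calc (R + 1) * matchingNumber (gr false b f)
        ≤ (R + 1) * (T * (b ^ (3 * k) / b * 2)) := Nat.mul_le_mul_left _ hup
      _ = b ^ (3 * k) / b * b := by
        generalize b ^ (3 * k) / b = q
        rw [hbdef]; ring
      _ ≤ b ^ (3 * k) := Nat.div_mul_le_self _ _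
      _ ≤ _ := hlow

end LevelGap

/-- For all integers `k ≥ 1` and `c ≥ 2k`, there exist finite simple graphs
`G` and `H` and a bijection `Φ` of their vertex sets preserving `k`-level degrees, while
`ν(H) ≥ 1` and `ν(G) ≥ ((c+1)/(4k))·ν(H)`. -/
theorem identical_kLevelDegrees_matching_gap (k c : ℕ) (hk : 1 ≤ k) (hc : 2 * k ≤ c) :
    ∃ (n m : ℕ) (G : SimpleGraph (Fin n)) (H : SimpleGraph (Fin m)) (Φ : Fin n ≃ Fin m),
      (∀ v : Fin n, kdeg G (k - 1) v = kdeg H (k - 1) (Φ v)) ∧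
      1 ≤ matchingNumber H ∧
      ((c : ℝ) + 1) / (4 * (k : ℝ)) * (matchingNumber H : ℝ) ≤ (matchingNumber G : ℝ) := by
  obtain ⟨n, G, H, h1, h2, h3⟩ := LevelGap.main k c hk
  refine ⟨n, n, G, H, Equiv.refl _, h1, h2, ?_⟩
  have hk' : (1 : ℝ) ≤ k := by exact_mod_cast hk
  have h3' : ((c : ℝ) + 1) * (matchingNumber H : ℝ) ≤ (matchingNumber G : ℝ) := by
    exact_mod_cast h3
  refine le_trans ?_ h3'
  refine mul_le_mul_of_nonneg_right ?_ (by positivity)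
  exact div_le_self (by positivity) (by linarith)
end

section
/- There is an absolute constant C such that the following holds. For every finite simple graph G = (V, E) with n ≥ 2 vertices and every integer g ≥ 1, there exist an integer R with 1 ≤ R ≤ n^{C·g} and a finite simple graph L on vertex set V × {1, …, R} such that: (1) R·ν(G) ≤ ν(L) ≤ 2R·ν(G); (2) L contains no cycle of length less than g; and (3) for every integer k ≥ 1, every v ∈ V and every r ∈ {1, …, R}, d_k^L((v, r)) = d_k^G(v). -/
open SimpleGraph

namespace LiftAux

lemma bdd {V : Type*} [Finite V] (G : SimpleGraph V) :
    BddAbove {n | ∃ M : Set (Sym2 V), IsMatchingSet G M ∧ M.ncard = n} := by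
  refine ⟨Nat.card (Sym2 V), ?_⟩
  rintro n ⟨M, -, rfl⟩
  rw [← Set.ncard_univ]
  exact Set.ncard_le_ncard (Set.subset_univ _) (Set.toFinite _)

lemma le_nu {V : Type*} [Finite V] {G : SimpleGraph V} {M : Set (Sym2 V)}
    (h : IsMatchingSet G M) : M.ncard ≤ matchingNumber G :=
  le_csSup (bdd G) ⟨M, h, rfl⟩

lemma exists_max {V : Type*} [Finite V] (G : SimpleGraph V) :
    ∃ M : Set (Sym2 V), IsMatchingSet G M ∧ M.ncard = matchingNumber G := by
  have := Nat.sSup_mem (s := {n | ∃ M : Set (Sym2 V), IsMatchingSet G M ∧ M.ncard = n})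
    ⟨0, ∅, ⟨by simp, by simp⟩, by simp⟩ (bdd G)
  exact this

/-- The lift given by symmetric involutive voltages. -/
def lift {V I : Type*} (G : SimpleGraph V) (σ : V → V → I → I)
    (hs : ∀ u v, σ u v = σ v u) (hi : ∀ u v i, σ u v (σ u v i) = i) : SimpleGraph (V × I) where
  Adj a b := G.Adj a.1 b.1 ∧ b.2 = σ a.1 b.1 a.2
  symm := ⟨by
    rintro a b ⟨h, h2⟩
    refine ⟨h.symm, ?_⟩
    rw [h2, hs b.1 a.1, hi]⟩
  loopless := ⟨fun a h => h.1.ne rfl⟩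

section
variable {V I : Type*} (G : SimpleGraph V) (σ : V → V → I → I)
    (hs : ∀ u v, σ u v = σ v u) (hi : ∀ u v i, σ u v (σ u v i) = i)

lemma nbr (v : V) (i : I) :
    (lift G σ hs hi).neighborSet (v, i) = (fun w => (w, σ v w i)) '' G.neighborSet v := by
  ext ⟨w, j⟩
  simp only [mem_neighborSet, lift, Set.mem_image, Prod.mk.injEq]
  constructor
  · rintro ⟨h, h2⟩
    exact ⟨w, h, rfl, h2.symm⟩
  · rintro ⟨w', h, rfl, rfl⟩
    exact ⟨h, rfl⟩

lemma kdeg_lift [Fintype V] [Fintype I] (k : ℕ) : ∀ (v : V) (i : I),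
    kdeg (lift G σ hs hi) k (v, i) = kdeg G k v := by
  have inj : ∀ (v : V) (i : I), Function.Injective (fun w => (w, σ v w i)) := by
    intro v i a b h
    exact (Prod.ext_iff.1 h).1
  induction k with
  | zero =>
    intro v i
    simp only [kdeg]
    rw [nbr]
    exact Set.ncard_image_of_injective _ (inj v i)
  | succ k ih =>
    intro v i
    simp only [kdeg]
    have : (Set.toFinite ((lift G σ hs hi).neighborSet (v, i))).toFinset =
        (Set.toFinite (G.neighborSet v)).toFinset.map ⟨_, inj v i⟩ := by
      ext x
      simp [nbr]
    rw [this, Finset.map_val, Multiset.map_map]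
    apply Multiset.map_congr rfl
    intro w _
    exact ih w _

lemma cover [Finite V] {M : Set (Sym2 V)} (hM : IsMatchingSet G M)
    (hmax : M.ncard = matchingNumber G) {u v : V} (h : G.Adj u v) :
    (∃ e ∈ M, u ∈ e) ∨ (∃ e ∈ M, v ∈ e) := by
  by_contra hc
  push Not at hc
  obtain ⟨h1, h2⟩ := hc
  have hnot : s(u, v) ∉ M := fun hh => h1 _ hh (by simp)
  have hM' : IsMatchingSet G (insert s(u, v) M) := by
    refine ⟨Set.insert_subset h hM.1, ?_⟩
    rintro e (rfl | he) f (rfl | hf) hne w ⟨hwe, hwf⟩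
    · exact hne rfl
    · rcases Sym2.mem_iff.1 hwe with rfl | rfl
      · exact h1 _ hf hwf
      · exact h2 _ hf hwf
    · rcases Sym2.mem_iff.1 hwf with rfl | rfl
      · exact h1 _ he hwe
      · exact h2 _ he hwe
    · exact hM.2 e he f hf hne w ⟨hwe, hwf⟩
  have := le_nu hM'
  rw [Set.ncard_insert_of_notMem hnot (Set.toFinite _)] at this
  omega

lemma cover_card [Finite V] (M : Set (Sym2 V)) :
    {v | ∃ e ∈ M, v ∈ e}.ncard ≤ 2 * M.ncard := by
  classical
  have := Fintype.ofFinite V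
  have : {v | ∃ e ∈ M, v ∈ e} = ((Set.toFinite M).toFinset.biUnion Sym2.toFinset : Finset V) := by
    ext v
    simp
  rw [this, Set.ncard_coe_finset, Set.ncard_eq_toFinset_card M, mul_comm]
  apply Finset.card_biUnion_le_card_mul
  intro e _
  induction e with
  | _ a b =>
    rw [Sym2.toFinset_mk_eq]
    exact Finset.card_le_two

lemma upper [Finite V] [Finite I] :
    matchingNumber (lift G σ hs hi) ≤ 2 * Nat.card I * matchingNumber G := by
  classical
  obtain ⟨M, hM, hmax⟩ := exists_max G
  obtain ⟨N, hN, hN2⟩ := exists_max (lift G σ hs hi)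
  set S : Set V := {v | ∃ e ∈ M, v ∈ e} with hS
  have key : ∀ e, ∃ x : V × I, e ∈ N → x ∈ e ∧ x.1 ∈ S := by
    intro e
    induction e with
    | _ a b =>
      by_cases he : s(a, b) ∈ N
      swap
      · exact ⟨a, fun h => absurd h he⟩
      have := hN.1 he
      have hab : G.Adj a.1 b.1 := this.1
      rcases cover G hM hmax hab with h | h
      · exact ⟨a, fun _ => ⟨by simp, h⟩⟩
      · exact ⟨b, fun _ => ⟨by simp, h⟩⟩
  choose f hf using key
  have hf1 : ∀ e ∈ N, f e ∈ e := fun e he => (hf e he).1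
  have hf2 : ∀ e ∈ N, (f e).1 ∈ S := fun e he => (hf e he).2
  have h1 : N.ncard ≤ (S ×ˢ (Set.univ : Set I)).ncard := by
    apply Set.ncard_le_ncard_of_injOn f
    · intro e he
      exact ⟨hf2 e he, trivial⟩
    · intro e he e' he' hee
      by_contra hne
      exact hN.2 e he e' he' hne (f e) ⟨hf1 e he, hee ▸ hf1 e' he'⟩
  rw [Set.ncard_prod, Set.ncard_univ] at h1
  have h2 := cover_card M
  rw [← hN2, ← hmax]
  calc _ ≤ _ := h1
    _ ≤ (2 * M.ncard) * Nat.card I := Nat.mul_le_mul_right _ h2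
    _ = _ := by ring

lemma lower [Finite V] [Finite I] :
    Nat.card I * matchingNumber G ≤ matchingNumber (lift G σ hs hi) := by
  obtain ⟨M, hM, hmax⟩ := exists_max G
  set N : Set (Sym2 (V × I)) := {e | e ∈ (lift G σ hs hi).edgeSet ∧ e.map Prod.fst ∈ M} with hNdef
  have hN : IsMatchingSet (lift G σ hs hi) N := by
    refine ⟨fun e he => he.1, ?_⟩
    rintro e he f hf hne x ⟨hxe, hxf⟩
    obtain ⟨a, rfl⟩ := hxe
    obtain ⟨b, rfl⟩ := hxf
    obtain ⟨⟨ha1, ha2⟩, ha3⟩ := he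
    obtain ⟨⟨hb1, hb2⟩, hb3⟩ := hf
    rw [Sym2.map_mk] at ha3 hb3
    have : s(x.1, a.1) = s(x.1, b.1) := by
      by_contra hcon
      exact hM.2 _ ha3 _ hb3 hcon x.1 (by simp)
    have hab : a.1 = b.1 := Sym2.congr_right.1 this
    apply hne
    have : a = b := Prod.ext hab (by rw [ha2, hb2, hab])
    rw [this]
  have hcard : (M ×ˢ (Set.univ : Set I)).ncard ≤ N.ncard := by
    have hout : ∀ e : Sym2 V, ∃ a b, e = s(a, b) := by
      intro e
      induction e with
      | _ a b => exact ⟨a, b, rfl⟩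
    choose p q hpq using hout
    apply Set.ncard_le_ncard_of_injOn
      (fun x : Sym2 V × I => s((p x.1, x.2), (q x.1, σ (p x.1) (q x.1) x.2)))
    · rintro ⟨e, i⟩ ⟨he, -⟩
      simp only at he
      have h1 := hM.1 he
      rw [hpq e] at h1
      refine ⟨⟨h1, rfl⟩, ?_⟩
      simp only [Sym2.map_mk]
      rw [← hpq e]
      exact he
    · rintro ⟨e, i⟩ ⟨he, -⟩ ⟨e', i'⟩ ⟨he', -⟩ heq
      simp only at heq he he'
      have hee : e = e' := by
        have := congrArg (Sym2.map Prod.fst) heq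
        simp only [Sym2.map_mk] at this
        rw [hpq e, hpq e', this]
      subst hee
      have h1 := hM.1 he
      rw [hpq e] at h1
      have hne : p e ≠ q e := h1.ne
      rw [Sym2.eq_iff] at heq
      rcases heq with ⟨h, -⟩ | ⟨h, -⟩
      · exact Prod.ext rfl (Prod.ext_iff.1 h).2
      · exact absurd (Prod.ext_iff.1 h).1 hne
  rw [Set.ncard_prod, Set.ncard_univ, hmax] at hcard
  have := le_nu hN
  rw [mul_comm]
  exact hcard.trans this

end

/-- The reflection swapping the inside and the outside of the interval around `c`. -/
def refl (R : Type*) [CommRing R] (c : R) : Matrix (Fin 2) (Fin 2) R := !![c, 1 - c ^ 2; 1, -c]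

lemma refl_sq (R : Type*) [CommRing R] (c : R) : refl R c * refl R c = 1 := by
  ext i j
  fin_cases i <;> fin_cases j <;> simp [refl, Matrix.mul_apply] <;> ring

/-- The reflection as a unit. -/
def reflU (R : Type*) [CommRing R] (c : R) : (Matrix (Fin 2) (Fin 2) R)ˣ :=
  ⟨refl R c, refl R c, refl_sq R c, refl_sq R c⟩

lemma refl_map (q : ℕ) (c : ℤ) (N : Matrix (Fin 2) (Fin 2) ℤ) :
    (refl ℤ c * N).map (Int.cast : ℤ → ZMod q) = refl (ZMod q) c * N.map Int.cast := by
  ext i j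
  rw [Matrix.map_apply, Matrix.mul_apply, Matrix.mul_apply, Fin.sum_univ_two, Fin.sum_univ_two]
  fin_cases i <;> simp [refl]

lemma pingpong {c c' x y : ℤ} (hcc : 3 ≤ |c' - c|) (h : |x - c * y| < |y|) :
    |(c' * x + (1 - c' ^ 2) * y) - c' * (x - c' * y)| < |x - c' * y| := by
  have e : (c' * x + (1 - c' ^ 2) * y) - c' * (x - c' * y) = y := by ring
  rw [e]
  have h1 : |(c' - c) * y| ≤ |x - c * y| + |x - c' * y| := by
    have : (c' - c) * y = (x - c * y) - (x - c' * y) := by ring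
    rw [this]
    exact abs_sub _ _
  rw [abs_mul] at h1
  have := abs_nonneg y
  nlinarith

lemma bound_step {c x y B D : ℤ} (hc : |c| ≤ D) (hx : |x| ≤ B) (hy : |y| ≤ B) :
    |c * x + (1 - c ^ 2) * y| ≤ (D ^ 2 + D + 1) * B ∧ |x - c * y| ≤ (D ^ 2 + D + 1) * B := by
  have hB : 0 ≤ B := (abs_nonneg _).trans hx
  have hD : 0 ≤ D := (abs_nonneg _).trans hc
  have h1 : |c * x| ≤ D * B := by rw [abs_mul]; gcongr
  have h2 : |c * y| ≤ D * B := by rw [abs_mul]; gcongr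
  have h3 : |c * (c * y)| ≤ D * (D * B) := by rw [abs_mul]; gcongr
  rw [abs_le] at hc hx hy h1 h2 h3
  rw [abs_le, abs_le]
  refine ⟨⟨?_, ?_⟩, ⟨?_, ?_⟩⟩ <;> nlinarith [mul_nonneg hD (mul_nonneg hD hB), mul_nonneg hD hB]

section
variable {V I : Type*} (G : SimpleGraph V) (q : ℕ) (e : I ≃ (Matrix (Fin 2) (Fin 2) (ZMod q))ˣ)
  (col : V → V → ℤ)

/-- Voltage permutations. -/
def vol (u v : V) (i : I) : I := e.symm (reflU (ZMod q) (col u v) * e i)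

lemma vol_symm (hc : ∀ u v, col u v = col v u) (u v : V) : vol q e col u v = vol q e col v u := by
  funext i
  simp [vol, hc u v]

lemma vol_inv (u v : V) (i : I) : vol q e col u v (vol q e col u v i) = i := by
  have : reflU (ZMod q) (col u v) * reflU (ZMod q) (col u v) = 1 :=
    Units.ext (refl_sq _ _)
  simp [vol, ← mul_assoc, this]

lemma main_step (hc : ∀ u v, col u v = col v u) (D : ℤ)
    (hD : ∀ u v, |col u v| ≤ D) (hsep : ∀ u v w, u ≠ w → 3 ≤ |col v w - col u v|)
    (X : Matrix (Fin 2) (Fin 2) (ZMod q)) {b d : V × I}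
    (p : (lift G (vol q e col) (vol_symm q e col hc) (vol_inv q e col)).Walk b d) :
    ∀ (a : V × I) (h : (lift G (vol q e col) (vol_symm q e col hc) (vol_inv q e col)).Adj a b),
      (Walk.cons h p).IsTrail → ∀ (N : Matrix (Fin 2) (Fin 2) ℤ) (B : ℤ),
      (e b.2).1 = N.map Int.cast * X →
      |N 0 0 - col a.1 b.1 * N 1 0| < |N 1 0| → |N 0 0| ≤ B → |N 1 0| ≤ B →
      ∃ N' : Matrix (Fin 2) (Fin 2) ℤ, (e d.2).1 = N'.map Int.cast * X ∧ N' 1 0 ≠ 0 ∧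
        |N' 1 0| ≤ (D ^ 2 + D + 1) ^ p.length * B := by
  induction p with
  | nil =>
    intro a h _ N B hN hp hx hy
    refine ⟨N, hN, ?_, by simpa using hy⟩
    intro h0
    rw [h0] at hp
    simp at hp
    have := abs_nonneg (N 0 0)
    omega
  | @cons b c d h' p' ih =>
    intro a h ht N B hN hp hx hy
    have hac : a.1 ≠ c.1 := by
      intro hac
      have hca : a = c := by
        refine Prod.ext hac ?_
        rw [h'.2, h.2, vol_symm q e col hc b.1 c.1, ← hac, vol_inv]
      subst hca
      rw [Walk.isTrail_cons] at ht
      apply ht.2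
      simp [Sym2.eq_swap]
    rw [Walk.isTrail_cons] at ht
    set N2 := refl ℤ (col b.1 c.1) * N with hN2
    have e0 : N2 0 0 = col b.1 c.1 * N 0 0 + (1 - col b.1 c.1 ^ 2) * N 1 0 := by
      rw [hN2, Matrix.mul_apply, Fin.sum_univ_two]; simp [refl]
    have e1 : N2 1 0 = N 0 0 - col b.1 c.1 * N 1 0 := by
      rw [hN2, Matrix.mul_apply, Fin.sum_univ_two]; simp [refl]; ring
    have hb := bound_step (hD b.1 c.1) hx hy
    obtain ⟨N', h1, h2, h3⟩ := ih b h' ht.1 N2 ((D ^ 2 + D + 1) * B)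
      (by
        rw [h'.2]
        simp only [vol, Equiv.apply_symm_apply, Units.val_mul]
        rw [hN, hN2, refl_map, mul_assoc]
        rfl)
      (by rw [e0, e1]; exact pingpong (hsep _ _ _ hac) hp)
      (by rw [e0]; exact hb.1) (by rw [e1]; exact hb.2)
    refine ⟨N', h1, h2, h3.trans (le_of_eq ?_)⟩
    simp only [Walk.length_cons]
    ring

lemma girth (hc : ∀ u v, col u v = col v u) (D : ℤ) (g : ℕ)
    (hD : ∀ u v, |col u v| ≤ D) (hsep : ∀ u v w, u ≠ w → 3 ≤ |col v w - col u v|)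
    (hq : (D ^ 2 + D + 1) ^ g ≤ (q : ℤ)) :
    (g : ℕ∞) ≤ (lift G (vol q e col) (vol_symm q e col hc) (vol_inv q e col)).egirth := by
  rw [le_egirth]
  intro a w hw
  by_contra hlt
  rw [not_le, Nat.cast_lt] at hlt
  cases w with
  | nil => simp at hw
  | @cons _ b _ h p =>
    have hD0 : 0 ≤ D := (abs_nonneg _).trans (hD a.1 a.1)
    set X := (e a.2).1 with hX
    obtain ⟨N', h1, h2, h3⟩ := main_step G q e col hc D hD hsep X p a h hw.isTrail
      (refl ℤ (col a.1 b.1)) (D ^ 2 + D + 1)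
      (by
        rw [h.2]
        simp only [vol, Equiv.apply_symm_apply, Units.val_mul]
        have := refl_map q (col a.1 b.1) 1
        rw [mul_one] at this
        rw [this]
        simp [reflU, hX])
      (by simp [refl])
      (by have := hD a.1 b.1; simp only [refl]; simp; nlinarith)
      (by simp [refl]; nlinarith)
    have h4 : N'.map (Int.cast : ℤ → ZMod q) = 1 := by
      have h5 : N'.map (Int.cast : ℤ → ZMod q) * X = 1 * X := by rw [one_mul, ← h1]
      exact (e a.2).isUnit.mul_right_cancel h5
    have h6 : ((N' 1 0 : ℤ) : ZMod q) = 0 := by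
      have := congrFun (congrFun h4 1) 0
      simpa using this
    rw [ZMod.intCast_zmod_eq_zero_iff_dvd] at h6
    have h7 : (q : ℤ) ≤ |N' 1 0| := Int.le_of_dvd (abs_pos.2 h2) ((dvd_abs _ _).2 h6)
    rw [← pow_succ] at h3
    simp only [Walk.length_cons] at hlt
    have hD1 : 1 < D := by
      -- two distinct vertices give separation
      have hab : a.1 ≠ b.1 := h.1.ne
      have s1 := hsep a.1 a.1 b.1 hab
      have s2 := abs_sub (col a.1 b.1) (col a.1 a.1)
      have := hD a.1 b.1
      have := hD a.1 a.1
      omega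
    have h8 : (D ^ 2 + D + 1) ^ (p.length + 1) < (D ^ 2 + D + 1) ^ g :=
      pow_lt_pow_right₀ (by nlinarith) hlt
    omega
end

end LiftAux

/-- **the lifting theorem.** There is an absolute constant `C` such that for every
finite simple graph `G` on `n ≥ 2` vertices and every integer `g ≥ 1` there are `R` with
`1 ≤ R ≤ n^(C·g)` and a graph `L` on vertex set `V × Fin R` with
`R·ν(G) ≤ ν(L) ≤ 2R·ν(G)`, no cycle of length `< g`, and `d_k^L((v,r)) = d_k^G(v)` for all
`k ≥ 1`, `v`, `r`. -/
theorem lifting_theorem :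
    ∃ C : ℝ, 0 < C ∧
      ∀ (V : Type) [Fintype V] (G : SimpleGraph V), 2 ≤ Fintype.card V →
        ∀ g : ℕ, 1 ≤ g →
          ∃ (R : ℕ) (L : SimpleGraph (V × Fin R)),
            1 ≤ R ∧ (R : ℝ) ≤ (Fintype.card V : ℝ) ^ (C * (g : ℝ)) ∧
            R * matchingNumber G ≤ matchingNumber L ∧
            matchingNumber L ≤ 2 * R * matchingNumber G ∧
            ((g : ℕ∞) ≤ L.egirth) ∧
            ∀ k : ℕ, 1 ≤ k → ∀ (v : V) (r : Fin R),
              kdeg L (k - 1) (v, r) = kdeg G (k - 1) v := by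
  refine ⟨32, by norm_num, ?_⟩
  intro V _ G hn g hg
  classical
  set n := Fintype.card V with hndef
  let idx := Fintype.equivFin V
  let col : V → V → ℤ := fun u v => 3 * ((idx u : ℕ) + (idx v : ℕ) : ℤ)
  have hc : ∀ u v, col u v = col v u := fun u v => by simp only [col]; ring
  have hD : ∀ u v, |col u v| ≤ 6 * (n : ℤ) := by
    intro u v
    have h1 := (idx u).isLt
    have h2 := (idx v).isLt
    simp only [col]
    rw [abs_le]
    omega
  have hsep : ∀ u v w, u ≠ w → 3 ≤ |col v w - col u v| := by
    intro u v w huw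
    have h1 : (idx u : ℕ) ≠ (idx w : ℕ) := fun h => huw (idx.injective (Fin.ext h))
    simp only [col]
    rw [le_abs]
    omega
  set q : ℕ := ((6 * n) ^ 2 + 6 * n + 1) ^ g with hq
  have hq0 : 0 < q := by positivity
  have : NeZero q := ⟨hq0.ne'⟩
  let R := Nat.card (Matrix (Fin 2) (Fin 2) (ZMod q))ˣ
  let e : Fin R ≃ (Matrix (Fin 2) (Fin 2) (ZMod q))ˣ := (Finite.equivFin _).symm
  refine ⟨R, LiftAux.lift G (LiftAux.vol q e col) (LiftAux.vol_symm q e col hc)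
    (LiftAux.vol_inv q e col), Nat.card_pos, ?_, ?_, ?_, ?_, ?_⟩
  · have hR : R ≤ q ^ 4 := by
      have h1 : R ≤ Nat.card (Matrix (Fin 2) (Fin 2) (ZMod q)) :=
        Nat.card_le_card_of_injective _ Units.val_injective
      have h2 : Nat.card (Matrix (Fin 2) (Fin 2) (ZMod q)) = q ^ 4 := by
        rw [Nat.card_eq_fintype_card]
        have : Fintype.card (Fin 2 → Fin 2 → ZMod q) = q ^ 4 := by
          simp only [Fintype.card_fun, Fintype.card_fin, ZMod.card]
          ring
        rw [← this]
        exact Fintype.card_congr (Equiv.refl _)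
      omega
    have hK : (6 * n) ^ 2 + 6 * n + 1 ≤ n ^ 8 := by
      have h6 : 2 ^ 6 ≤ n ^ 6 := Nat.pow_le_pow_left hn 6
      calc (6 * n) ^ 2 + 6 * n + 1 ≤ 2 ^ 6 * n ^ 2 := by nlinarith
        _ ≤ n ^ 6 * n ^ 2 := Nat.mul_le_mul_right _ h6
        _ = n ^ 8 := by ring
    have hfin : R ≤ n ^ (32 * g) := by
      calc R ≤ q ^ 4 := hR
        _ ≤ ((n ^ 8) ^ g) ^ 4 := by rw [hq]; gcongr
        _ = n ^ (32 * g) := by rw [← pow_mul, ← pow_mul]; congr 1; ring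
    have : (n : ℝ) ^ ((32 : ℝ) * (g : ℝ)) = ((n ^ (32 * g) : ℕ) : ℝ) := by
      rw [show (32 : ℝ) * (g : ℝ) = ((32 * g : ℕ) : ℝ) by push_cast; ring, Real.rpow_natCast]
      push_cast; rfl
    rw [this]
    exact_mod_cast hfin
  · have := LiftAux.lower G (LiftAux.vol q e col) (LiftAux.vol_symm q e col hc)
      (LiftAux.vol_inv q e col)
    rwa [Nat.card_fin] at this
  · have := LiftAux.upper G (LiftAux.vol q e col) (LiftAux.vol_symm q e col hc)
      (LiftAux.vol_inv q e col)
    rwa [Nat.card_fin] at this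
  · refine LiftAux.girth G q e col hc (6 * (n : ℤ)) g hD hsep ?_
    rw [hq]
    push_cast
    exact le_rfl
  · intro k _ v r
    exact LiftAux.kdeg_lift G _ _ _ (k - 1) v r
end
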